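/- The girth of the zero-divisor graph Γ(R) equals 3; in particular Γ(R) contains a triangle, for example on the vertices u, uv and u + uv. -/

import Mathlib

/- `Rng p` models the ring `R = 𝔽_p[u,v]/⟨u², v², uv - vu⟩`:
every element is uniquely `a + b·u + c·v + d·uv` with `a b c d : ZMod p`. -/
set_option synthInstance.maxHeartbeats 1000000
set_option maxHeartbeats 1000000

abbrev Rng (p : ℕ) : Type := DualNumber (DualNumber (ZMod p))

/-- The element `u` of `R` (satisfies `u² = 0`). -/
def uu (p : ℕ) : Rng p := TrivSqZeroExt.inl DualNumber.eps

/-- The element `v` of `R` (satisfies `v² = 0`). -/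
def vv (p : ℕ) : Rng p := DualNumber.eps

/-- The vertex set `Z*(R)`: nonzero zero-divisors of `R`. -/
abbrev Vtx (p : ℕ) : Type := {x : Rng p // x ≠ 0 ∧ ∃ y : Rng p, y ≠ 0 ∧ x * y = 0}

/-- The zero-divisor graph `Γ(R)`. -/
def ZDG (p : ℕ) : SimpleGraph (Vtx p) where
  Adj a b := a ≠ b ∧ (a : Rng p) * (b : Rng p) = 0
  symm := ⟨fun a b h => ⟨h.1.symm, (mul_comm (b : Rng p) (a : Rng p)).trans h.2⟩⟩
  loopless := ⟨fun a h => h.1 rfl⟩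

instance (p : ℕ) : DecidableEq (Rng p) :=
  inferInstanceAs (DecidableEq ((ZMod p × ZMod p) × ZMod p × ZMod p))

instance (p : ℕ) [NeZero p] : Fintype (Rng p) :=
  inferInstanceAs (Fintype ((ZMod p × ZMod p) × ZMod p × ZMod p))

instance (p : ℕ) : DecidableRel (ZDG p).Adj :=
  fun a b => inferInstanceAs (Decidable (a ≠ b ∧ (a : Rng p) * (b : Rng p) = 0))

/-! If `u² = 0`, any two multiples of `u` have product zero, so the nonzero multiples of `u` are
pairwise adjacent vertices. When `v` is nilpotent, `1 - v` and `1 + v` are units; hence as soon as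
`uv ≠ 0` the multiples `u`, `uv` and `u(1 + v)` are nonzero and distinct, and form a triangle. -/

theorem girth_eq_three_of_adj {V : Type*} {G : SimpleGraph V} {a b c : V}
    (hab : G.Adj a b) (hbc : G.Adj b c) (hac : G.Adj a c) : G.girth = 3 := by
  classical
  obtain ⟨_, w, hw, hlength⟩ := SimpleGraph.is3Clique_iff_exists_cycle_length_three.mp
    ⟨{a, b, c}, SimpleGraph.is3Clique_triple_iff.mpr ⟨hab, hac, hbc⟩⟩
  exact le_antisymm (hlength ▸ SimpleGraph.girth_le_length hw)
    (SimpleGraph.three_le_girth fun hacyclic => hacyclic w hw)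

section CommMonoidWithZero

variable {M : Type*} [CommMonoidWithZero M] {u : M}

theorem mul_eq_zero_of_dvd_of_dvd {x y : M} (hu : u * u = 0) (hx : u ∣ x) (hy : u ∣ y) :
    x * y = 0 :=
  zero_dvd_iff.mp (hu ▸ mul_dvd_mul hx hy)

variable (M) in
/-- The set `Z*(M)` of nonzero zero-divisors, as a type: the vertices of the zero-divisor graph.
Only the multiplication of a commutative ring matters, so `M` is a commutative monoid with zero;
`Vtx p` unfolds to the case `M = Rng p`. -/
abbrev NonzeroZeroDivisor : Type _ := {x : M // x ≠ 0 ∧ ∃ y : M, y ≠ 0 ∧ x * y = 0}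

variable (M) in
/-- The zero-divisor graph `Γ(M)`: distinct nonzero zero-divisors are joined when their product is
zero. `ZDG p` unfolds to the case `M = Rng p`. -/
def zeroDivisorGraph : SimpleGraph (NonzeroZeroDivisor M) where
  Adj a b := a ≠ b ∧ (a : M) * (b : M) = 0
  symm := ⟨fun _ _ h => ⟨h.1.symm, (mul_comm _ _).trans h.2⟩⟩
  loopless := ⟨fun _ h => h.1 rfl⟩

theorem zeroDivisorGraph_adj_of_dvd {a b : NonzeroZeroDivisor M} (hu : u * u = 0)
    (ha : u ∣ (a : M)) (hb : u ∣ (b : M)) (hab : (a : M) ≠ b) : (zeroDivisorGraph M).Adj a b :=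
  ⟨Subtype.coe_ne_coe.mp hab, mul_eq_zero_of_dvd_of_dvd hu ha hb⟩

end CommMonoidWithZero

section Ring

variable {R : Type*} [Ring R] {u v : R}

theorem ne_mul_of_isNilpotent (hv : IsNilpotent v) (hu : u ≠ 0) : u ≠ u * v := by
  intro h
  have hzero : u * (1 - v) = 0 := by rw [mul_sub, mul_one, ← h, sub_self]
  exact hu (hv.isUnit_one_sub.mul_left_eq_zero.mp hzero)

theorem add_mul_ne_zero_of_isNilpotent (hv : IsNilpotent v) (hu : u ≠ 0) : u + u * v ≠ 0 := by
  intro h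
  have hzero : u * (1 + v) = 0 := by rw [mul_add, mul_one, h]
  exact hu (hv.isUnit_one_add.mul_left_eq_zero.mp hzero)

end Ring

section CommRing

variable {R : Type*} [CommRing R] {u v : R}

theorem exists_zeroDivisorGraph_triangle (hu : u * u = 0) (hv : IsNilpotent v) (huv : u * v ≠ 0) :
    ∃ a b c : NonzeroZeroDivisor R,
      (a : R) = u ∧ (b : R) = u * v ∧ (c : R) = u + u * v ∧
        (zeroDivisorGraph R).Adj a b ∧ (zeroDivisorGraph R).Adj b c ∧
          (zeroDivisorGraph R).Adj a c := by
  have hu0 : u ≠ 0 := left_ne_zero_of_mul huv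
  have hdvd_mul : u ∣ u * v := dvd_mul_right u v
  have hdvd_add : u ∣ u + u * v := dvd_add dvd_rfl hdvd_mul
  have hmul_self {x : R} (hx : u ∣ x) : x * x = 0 := mul_eq_zero_of_dvd_of_dvd hu hx hx
  have hadd_ne_zero : u + u * v ≠ 0 := add_mul_ne_zero_of_isNilpotent hv hu0
  let a : NonzeroZeroDivisor R := ⟨u, hu0, u, hu0, hu⟩
  let b : NonzeroZeroDivisor R := ⟨u * v, huv, u * v, huv, hmul_self hdvd_mul⟩
  let c : NonzeroZeroDivisor R :=
    ⟨u + u * v, hadd_ne_zero, u + u * v, hadd_ne_zero, hmul_self hdvd_add⟩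
  have hab : (a : R) ≠ b := ne_mul_of_isNilpotent hv hu0
  have hbc : (b : R) ≠ c := right_eq_add.not.mpr hu0
  have hac : (a : R) ≠ c := left_eq_add.not.mpr huv
  exact ⟨a, b, c, rfl, rfl, rfl, zeroDivisorGraph_adj_of_dvd hu dvd_rfl hdvd_mul hab,
    zeroDivisorGraph_adj_of_dvd hu hdvd_mul hdvd_add hbc,
    zeroDivisorGraph_adj_of_dvd hu dvd_rfl hdvd_add hac⟩

theorem stmt5_general (hu : u * u = 0) (hv : IsNilpotent v) (huv : u * v ≠ 0) :
    (zeroDivisorGraph R).girth = 3 ∧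
      ∃ a b c : NonzeroZeroDivisor R,
        (a : R) = u ∧ (b : R) = u * v ∧ (c : R) = u + u * v ∧
          (zeroDivisorGraph R).Adj a b ∧ (zeroDivisorGraph R).Adj b c ∧
            (zeroDivisorGraph R).Adj a c := by
  obtain ⟨a, b, c, ha, hb, hc, hab, hbc, hac⟩ := exists_zeroDivisorGraph_triangle hu hv huv
  exact ⟨girth_eq_three_of_adj hab hbc hac, a, b, c, ha, hb, hc, hab, hbc, hac⟩

end CommRing

theorem uu_mul_uu (p : ℕ) : uu p * uu p = 0 := by
  rw [uu, ← TrivSqZeroExt.inl_mul, DualNumber.eps_mul_eps, TrivSqZeroExt.inl_zero]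

theorem isNilpotent_vv (p : ℕ) : IsNilpotent (vv p) :=
  TrivSqZeroExt.isNilpotent_inr 1

theorem uu_mul_vv (p : ℕ) : uu p * vv p = TrivSqZeroExt.inr DualNumber.eps := by
  rw [uu, vv, TrivSqZeroExt.inl_mul_eq_smul, ← DualNumber.inr_eq_smul_eps]

theorem uu_mul_vv_ne_zero (p : ℕ) [Nontrivial (ZMod p)] : uu p * vv p ≠ 0 := by
  rw [uu_mul_vv]
  intro h
  have heps : (DualNumber.eps : DualNumber (ZMod p)) = 0 := congrArg TrivSqZeroExt.snd h
  exact one_ne_zero (congrArg TrivSqZeroExt.snd heps)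

theorem stmt5 (p : ℕ) [Fact p.Prime] (hodd : Odd p) :
    (ZDG p).girth = 3 ∧
      ∃ a b c : Vtx p, (a : Rng p) = uu p ∧ (b : Rng p) = uu p * vv p ∧
        (c : Rng p) = uu p + uu p * vv p ∧
        (ZDG p).Adj a b ∧ (ZDG p).Adj b c ∧ (ZDG p).Adj a c := by
  exact stmt5_general (R := Rng p) (uu_mul_uu p) (isNilpotent_vv p) (uu_mul_vv_ne_zero p)
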